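/- Let k ≥ 2 be an integer, α = (1+√(1+4/k))/2, β = kα+1, a_n = ⌊nα⌋, b_n = ⌊nβ⌋. Fix i ∈ {1,…,k−1} and r ≥ 1, and set (p,q) = (f^i_r, g^i_r − 1). Then for all integers m ≥ 0 and n ≥ 0 none of the following hold: (a_m − p, b_m − q) = (a_n, b_n); (a_m − p, b_m − q) = (b_n, a_n); (a_m − q, b_m − p) = (a_n, b_n); (a_m − q, b_m − p) = (b_n, a_n). (No move of Type III connects two positions of the form (a_m,b_m).) -/

import Mathlib

/-- α = (1 + √(1 + 4/k)) / 2 -/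
noncomputable def alphaK (k : ℕ) : ℝ := (1 + Real.sqrt (1 + 4 / (k : ℝ))) / 2

/-- β = k·α + 1 -/
noncomputable def betaK (k : ℕ) : ℝ := (k : ℝ) * alphaK k + 1

/-- a_n = ⌊n·α⌋ -/
noncomputable def aSeq (k n : ℕ) : ℤ := ⌊(n : ℝ) * alphaK k⌋

/-- b_n = ⌊n·β⌋ -/
noncomputable def bSeq (k n : ℕ) : ℤ := ⌊(n : ℝ) * betaK k⌋

/-- the pair (f^i_n, g^i_n): (f^i_0,g^i_0) = (0,i+1),
    (f^i_n, g^i_n) = (f^i_{n−1} + g^i_{n−1}, k·f^i_{n−1} + (k+1)·g^i_{n−1} + i). -/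
def fg (k i : ℕ) : ℕ → ℕ × ℕ
  | 0 => (0, i + 1)
  | n + 1 => ((fg k i n).1 + (fg k i n).2,
      k * (fg k i n).1 + (k + 1) * (fg k i n).2 + i)

/-!
Put `N = g_{r-1}`. The quantity `g_r (α - 1) - f_r` is updated by a convex combination with `i / k`,
so it stays in `[i/k, 1)`; since it equals `g_r α - f_{r+1}`, it is the fractional part of `g_r α`.
Hence `p = f_r = a_N`, and `q = k a_N + N + (i - 1)` lies in the interval `[k a_N + N, b_N)`.

For such `(p, q)` three of the four cases are excluded because `a`, `b` and `b - a` are monotone and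
`p < q < b_N`. In the remaining case `a_m - a_n = a_N` and `b_m - b_n = q`. Superadditivity of `b`
rules out `m ≥ n + N`. If `m < n + N`, then `b_n = k a_n + n + ⌊k {n α}⌋` forces `{n α} < {m α}`,
so that `a_m - a_n < (m - n) α ≤ (N - 1) α < a_N`.
-/

open Set

section Beatty

variable {α β r : ℝ} {k : ℕ} {m n N p q : ℤ}

lemma monotone_beattySeq (hr : 0 ≤ r) : Monotone (beattySeq r) := fun _ _ h ↦
  Int.floor_mono (mul_le_mul_of_nonneg_right (Int.cast_le.2 h) hr)

lemma beattySeq_zero : beattySeq r 0 = 0 := by simp [beattySeq]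

lemma beattySeq_nonneg (hr : 0 ≤ r) (hn : 0 ≤ n) : 0 ≤ beattySeq r n :=
  beattySeq_zero.symm.trans_le (monotone_beattySeq hr hn)

lemma beattySeq_add_le : beattySeq r m + beattySeq r n ≤ beattySeq r (m + n) := by
  simpa only [beattySeq, Int.cast_add, add_mul] using Int.le_floor_add (m * r) (n * r)

lemma strictMono_beattySeq (hr : 1 ≤ r) : StrictMono (beattySeq r) := by
  refine strictMono_int_of_lt_succ fun n ↦ ?_
  have hone : 1 ≤ beattySeq r 1 := by simpa [beattySeq, Int.le_floor] using hr
  linarith [beattySeq_add_le (r := r) (m := n) (n := 1)]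

lemma monotone_beattySeq_sub (h : α + 1 ≤ β) :
    Monotone fun n ↦ beattySeq β n - beattySeq α n := by
  refine monotone_int_of_le_succ fun n ↦ ?_
  have hα : beattySeq α (n + 1) ≤ beattySeq α n + ⌊α⌋ + 1 := by
    simpa [beattySeq, add_mul] using Int.le_floor_add_floor (n * α) α
  have hβ : beattySeq β n + beattySeq β 1 ≤ beattySeq β (n + 1) := beattySeq_add_le
  have hone : ⌊α⌋ + 1 ≤ beattySeq β 1 := by
    simpa [beattySeq] using Int.floor_mono h
  linarith

lemma beattySeq_le_beattySeq (h : α + 1 ≤ β) (hn : 0 ≤ n) : beattySeq α n ≤ beattySeq β n := by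
  simpa [beattySeq_zero] using monotone_beattySeq_sub h hn

lemma beattySeq_natCast_mul_add_one :
    beattySeq (k * α + 1) n = k * beattySeq α n + n + ⌊k * Int.fract (n * α)⌋ := by
  have hsplit : (n : ℝ) * (k * α + 1) =
      ((k * beattySeq α n + n : ℤ) : ℝ) + k * Int.fract (n * α) := by
    have := Int.floor_add_fract ((n : ℝ) * α)
    push_cast [beattySeq]
    linear_combination -(k : ℝ) * this
  rw [beattySeq, hsplit, Int.floor_intCast_add]

lemma beattySeq_lt_add_of_fract_le (hα : 1 ≤ α) (hmn : m < n + N)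
    (hfract : Int.fract (n * α) ≤ Int.fract (m * α)) :
    beattySeq α m < beattySeq α n + beattySeq α N := by
  have hm := Int.floor_add_fract ((m : ℝ) * α)
  have hn := Int.floor_add_fract ((n : ℝ) * α)
  have hN := Int.lt_floor_add_one ((N : ℝ) * α)
  have hstep : (m : ℝ) * α + α ≤ n * α + N * α := by
    have : (m : ℝ) + 1 ≤ n + N := mod_cast hmn
    calc (m : ℝ) * α + α = (m + 1) * α := by ring
      _ ≤ (n + N) * α := by gcongr
      _ = n * α + N * α := by ring
  rify [beattySeq]
  linarith

/-- The position `(a_n, b_n) = (⌊n α⌋, ⌊n β⌋)`; such positions and their images under `Prod.swap`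
are the P-positions between which no move is to exist. -/
noncomputable def beattyPair (α β : ℝ) (n : ℤ) : ℤ × ℤ := (beattySeq α n, beattySeq β n)

lemma beattyPair_sub_ne_beattyPair_of_mem_Ico (hα : 1 ≤ α)
    (hq : q ∈ Ico (k * beattySeq α N + N) (beattySeq (k * α + 1) N)) :
    beattyPair α (k * α + 1) m - (beattySeq α N, q) ≠ beattyPair α (k * α + 1) n := by
  intro h
  obtain ⟨ha, hb⟩ : beattySeq α m - beattySeq α N = beattySeq α n ∧
      beattySeq (k * α + 1) m - q = beattySeq (k * α + 1) n := Prod.mk.inj h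
  rcases le_or_gt (n + N) m with hle | hlt
  · have hmono := monotone_beattySeq (r := k * α + 1) (by positivity) hle
    linarith [hq.2, beattySeq_add_le (r := k * α + 1) (m := n) (n := N)]
  · have hfloor : ⌊k * Int.fract (n * α)⌋ < ⌊k * Int.fract (m * α)⌋ := by
      rw [beattySeq_natCast_mul_add_one, beattySeq_natCast_mul_add_one, ← ha] at hb
      linarith [hq.1]
    have hfract : Int.fract (n * α) ≤ Int.fract (m * α) := by
      by_contra! hgt
      exact hfloor.not_ge (Int.floor_mono (by gcongr))
    linarith [beattySeq_lt_add_of_fract_le hα hlt hfract]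

lemma beattyPair_sub_ne_swap_of_lt_beattySeq (hα : 1 ≤ α) (hβ : α + 1 ≤ β) (hn : 0 ≤ n)
    (hq : q < beattySeq β N) :
    beattyPair α β m - (beattySeq α N, q) ≠ (beattyPair α β n).swap := by
  intro h
  obtain ⟨ha, hb⟩ : beattySeq α m - beattySeq α N = beattySeq β n ∧
      beattySeq β m - q = beattySeq α n := Prod.mk.inj h
  have hNm : N ≤ m := (strictMono_beattySeq hα).le_iff_le.1 <| by
    linarith [beattySeq_nonneg (r := β) (by linarith) hn]
  have hsub : beattySeq β N - beattySeq α N ≤ beattySeq β m - beattySeq α m :=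
    monotone_beattySeq_sub hβ hNm
  linarith [beattySeq_le_beattySeq hβ hn]

lemma beattyPair_sub_ne_beattyPair_of_gt (hα : 0 ≤ α) (hβ : α + 1 ≤ β) (hq : 0 < q)
    (hpq : p < q) : beattyPair α β m - (q, p) ≠ beattyPair α β n := by
  intro h
  obtain ⟨ha, hb⟩ : beattySeq α m - q = beattySeq α n ∧
      beattySeq β m - p = beattySeq β n := Prod.mk.inj h
  have hnm : n < m := (monotone_beattySeq hα).reflect_lt (by linarith)
  have hsub : beattySeq β n - beattySeq α n ≤ beattySeq β m - beattySeq α m :=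
    monotone_beattySeq_sub hβ hnm.le
  linarith

lemma beattyPair_sub_ne_swap_of_gt (hβ : α + 1 ≤ β) (hm : 0 ≤ m) (hn : 0 ≤ n) (hpq : p < q) :
    beattyPair α β m - (q, p) ≠ (beattyPair α β n).swap := by
  intro h
  obtain ⟨ha, hb⟩ : beattySeq α m - q = beattySeq β n ∧
      beattySeq β m - p = beattySeq α n := Prod.mk.inj h
  linarith [beattySeq_le_beattySeq hβ hm, beattySeq_le_beattySeq hβ hn]

end Beatty

section AlphaBeta

variable {k : ℕ}

lemma one_lt_alphaK (hk : 0 < k) : 1 < alphaK k := by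
  have hsqrt : 1 < √(1 + 4 / (k : ℝ)) := Real.lt_sqrt_of_sq_lt <| by
    have : 0 < 4 / (k : ℝ) := by positivity
    linarith
  unfold alphaK
  linarith

lemma natCast_mul_alphaK_mul_alphaK_sub_one (hk : 0 < k) :
    (k : ℝ) * (alphaK k * (alphaK k - 1)) = 1 := by
  have hsq := Real.sq_sqrt (show 0 ≤ 1 + 4 / (k : ℝ) by positivity)
  calc (k : ℝ) * (alphaK k * (alphaK k - 1)) = k * (√(1 + 4 / (k : ℝ)) ^ 2 - 1) / 4 := by
        unfold alphaK; ring
    _ = 1 := by rw [hsq]; field_simp; ring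

lemma natCast_mul_alphaK_sub_one_lt_one (hk : 0 < k) : (k : ℝ) * (alphaK k - 1) < 1 := by
  have hpos : 0 < (k : ℝ) * (alphaK k - 1) :=
    mul_pos (mod_cast hk) (sub_pos.2 (one_lt_alphaK hk))
  calc (k : ℝ) * (alphaK k - 1) < k * (alphaK k - 1) * alphaK k :=
        lt_mul_of_one_lt_right hpos (one_lt_alphaK hk)
    _ = 1 := by linear_combination natCast_mul_alphaK_mul_alphaK_sub_one hk

lemma alphaK_add_one_le_betaK (hk : 0 < k) : alphaK k + 1 ≤ betaK k := by
  have : (1 : ℝ) ≤ k := mod_cast hk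
  unfold betaK
  nlinarith [one_lt_alphaK hk]

lemma mk_aSeq_bSeq_eq_beattyPair (n : ℕ) :
    (aSeq k n, bSeq k n) = beattyPair (alphaK k) (betaK k) n := by
  simp [aSeq, bSeq, beattyPair, beattySeq]

end AlphaBeta

section MoveSequence

variable {k i : ℕ}

/-- The gap `g_r (α - 1) - f_r = g_r α - f_{r+1}`, which will turn out to be the fractional part of
`g_r α`. -/
noncomputable def fgGap (k i r : ℕ) : ℝ := (fg k i r).2 * (alphaK k - 1) - (fg k i r).1

lemma fgGap_succ (hk : 0 < k) (r : ℕ) :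
    fgGap k i (r + 1) =
      (1 - k * (alphaK k - 1)) * fgGap k i r + k * (alphaK k - 1) * (i / k) := by
  simp only [fgGap, fg]
  push_cast
  field_simp
  linear_combination ((fg k i r).2 : ℝ) * natCast_mul_alphaK_mul_alphaK_sub_one hk

lemma fgGap_zero_mem_Ico (hik : i < k) : fgGap k i 0 ∈ Ico ((i : ℝ) / k) 1 := by
  have hk : 0 < k := by lia
  have hk' : (0 : ℝ) < k := mod_cast hk
  have hik' : (i : ℝ) + 1 ≤ k := mod_cast hik
  have hα := one_lt_alphaK hk
  have hlt := natCast_mul_alphaK_sub_one_lt_one hk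
  have hgap : fgGap k i 0 = (i + 1) * (alphaK k - 1) := by simp [fgGap, fg]
  have hiα : i * alphaK k ≤ i + 1 := by
    have : i * (alphaK k - 1) ≤ k * (alphaK k - 1) := by gcongr
    linarith
  rw [hgap]
  constructor
  · calc (i : ℝ) / k = i * alphaK k * (alphaK k - 1) := by
          rw [div_eq_iff hk'.ne']
          linear_combination -(i : ℝ) * natCast_mul_alphaK_mul_alphaK_sub_one hk
      _ ≤ (i + 1) * (alphaK k - 1) := by gcongr
  · calc (i + 1) * (alphaK k - 1) ≤ k * (alphaK k - 1) := by gcongr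
      _ < 1 := hlt

lemma fgGap_mem_Ico (hik : i < k) (r : ℕ) : fgGap k i r ∈ Ico ((i : ℝ) / k) 1 := by
  have hk : 0 < k := by lia
  induction r with
  | zero => exact fgGap_zero_mem_Ico hik
  | succ r ih =>
    have hα := one_lt_alphaK hk
    have hlt := natCast_mul_alphaK_sub_one_lt_one hk
    have hfix : (i : ℝ) / k ∈ Ico ((i : ℝ) / k) 1 :=
      left_mem_Ico.2 <| (div_lt_one (by positivity)).2 (mod_cast hik)
    rw [fgGap_succ hk]
    exact convex_Ico ((i : ℝ) / k) 1 ih hfix (sub_nonneg.2 hlt.le)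
      (mul_nonneg k.cast_nonneg (sub_nonneg.2 hα.le)) (sub_add_cancel 1 _)

lemma fg_snd_mul_alphaK (r : ℕ) :
    (fg k i r).2 * alphaK k = (fg k i (r + 1)).1 + fgGap k i r := by
  simp only [fgGap, fg]
  push_cast
  ring

lemma fg_succ_fst_eq_beattySeq (hik : i < k) (r : ℕ) :
    ((fg k i (r + 1)).1 : ℤ) = beattySeq (alphaK k) (fg k i r).2 := by
  obtain ⟨hle, hlt⟩ := fgGap_mem_Ico hik r
  have hnonneg : 0 ≤ fgGap k i r := le_trans (by positivity) hle
  refine (Int.floor_eq_iff.2 ?_).symm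
  push_cast [fg_snd_mul_alphaK]
  constructor <;> linarith

lemma fract_fg_snd_mul_alphaK (hik : i < k) (r : ℕ) :
    Int.fract ((fg k i r).2 * alphaK k) = fgGap k i r := by
  obtain ⟨hle, hlt⟩ := fgGap_mem_Ico hik r
  rw [fg_snd_mul_alphaK, Int.fract_natCast_add]
  exact Int.fract_eq_self.2 ⟨le_trans (by positivity) hle, hlt⟩

lemma fg_succ_snd_sub_one_mem_Ico (hi : 1 ≤ i) (hik : i < k) (r : ℕ) :
    ((fg k i (r + 1)).2 : ℤ) - 1 ∈ Ico (k * beattySeq (alphaK k) (fg k i r).2 + (fg k i r).2)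
      (beattySeq (betaK k) (fg k i r).2) := by
  have hk : (0 : ℝ) < k := Nat.cast_pos.2 (by lia)
  have hfloor : (i : ℤ) ≤ ⌊k * Int.fract ((fg k i r).2 * alphaK k)⌋ := by
    rw [fract_fg_snd_mul_alphaK hik, Int.le_floor, Int.cast_natCast, ← div_le_iff₀' hk]
    exact (fgGap_mem_Ico hik r).1
  have hsnd : ((fg k i (r + 1)).2 : ℤ) = k * (fg k i (r + 1)).1 + (fg k i r).2 + i := by
    simp only [fg]
    push_cast
    ring
  rw [betaK, beattySeq_natCast_mul_add_one, ← fg_succ_fst_eq_beattySeq hik]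
  constructor <;> push_cast <;> linarith

lemma fg_succ_fst_lt_snd_sub_one (hi : 1 ≤ i) (hik : i < k) (r : ℕ) :
    ((fg k i (r + 1)).1 : ℤ) < (fg k i (r + 1)).2 - 1 := by
  have hpos : 0 < (fg k i r).2 := by cases r <;> simp only [fg] <;> lia
  have hmul : (fg k i r).1 ≤ k * (fg k i r).1 ∧ (fg k i r).2 < k * (fg k i r).2 :=
    ⟨Nat.le_mul_of_pos_left _ (by lia), lt_mul_of_one_lt_left hpos (by lia)⟩
  simp only [fg, add_one_mul]
  lia

end MoveSequence

/-- No move of Type III connects two positions of the form (a_m, b_m). -/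
theorem no_typeIII_move_P_to_P (k : ℕ) (hk : 2 ≤ k) (i : ℕ)
    (hi1 : 1 ≤ i) (hik : i ≤ k - 1) (r : ℕ) (hr : 1 ≤ r) (m n : ℕ) :
    ¬ ((aSeq k m - ((fg k i r).1 : ℤ) = aSeq k n ∧
        bSeq k m - (((fg k i r).2 : ℤ) - 1) = bSeq k n) ∨
       (aSeq k m - ((fg k i r).1 : ℤ) = bSeq k n ∧
        bSeq k m - (((fg k i r).2 : ℤ) - 1) = aSeq k n) ∨
       (aSeq k m - (((fg k i r).2 : ℤ) - 1) = aSeq k n ∧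
        bSeq k m - ((fg k i r).1 : ℤ) = bSeq k n) ∨
       (aSeq k m - (((fg k i r).2 : ℤ) - 1) = bSeq k n ∧
        bSeq k m - ((fg k i r).1 : ℤ) = aSeq k n)) := by
  obtain ⟨r, rfl⟩ := Nat.exists_eq_add_of_le' hr
  have hik : i < k := by lia
  have hα := one_lt_alphaK (k := k) (by lia)
  have hβ := alphaK_add_one_le_betaK (k := k) (by lia)
  have hq := fg_succ_snd_sub_one_mem_Ico hi1 hik r
  have hpq := fg_succ_fst_lt_snd_sub_one hi1 hik r
  have hswap : (bSeq k n, aSeq k n) = (beattyPair (alphaK k) (betaK k) n).swap := by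
    rw [← mk_aSeq_bSeq_eq_beattyPair, Prod.swap_prod_mk]
  simp only [← Prod.mk.injEq, ← Prod.mk_sub_mk, mk_aSeq_bSeq_eq_beattyPair, hswap]
  rintro (h | h | h | h)
  · rw [fg_succ_fst_eq_beattySeq hik] at h
    exact beattyPair_sub_ne_beattyPair_of_mem_Ico hα.le hq h
  · rw [fg_succ_fst_eq_beattySeq hik] at h
    exact beattyPair_sub_ne_swap_of_lt_beattySeq hα.le hβ n.cast_nonneg hq.2 h
  · exact beattyPair_sub_ne_beattyPair_of_gt (by linarith) hβ (by lia) hpq h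
  · exact beattyPair_sub_ne_swap_of_gt hβ m.cast_nonneg n.cast_nonneg hpq h
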